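/- arXiv:0809.2267 — 5 statements merged into one kernel-verified Lean document; each statement's English description precedes it below -/
import Mathlib

section
/- Ramsey's theorem for trees in all exponents: for every n ≥ 1, every k ≥ 1, and every coloring f assigning to each strictly increasing n-chain σ₁ ⊊ σ₂ ⊊ ⋯ ⊊ σₙ of elements of 2^{<ℕ} a color in Fin k, there exists a subtree S of 2^{<ℕ} isomorphic to 2^{<ℕ} such that f is constant on the set of strictly increasing n-chains of elements of S. -/
/-- Strict prefix relation on `List Bool` (σ is a proper initial segment of τ). -/
def SPrefix (σ τ : List Bool) : Prop := σ <+: τ ∧ σ ≠ τ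

/-- `S` is a subtree of `2^{<ℕ}` isomorphic to `2^{<ℕ}`: there is a bijection
`b` from `List Bool` onto `S` such that σ ⊆ τ ↔ b σ ⊆ b τ. -/
def IsoSubtree (S : Set (List Bool)) : Prop :=
  ∃ b : List Bool → List Bool,
    (∀ σ, b σ ∈ S) ∧ (∀ t ∈ S, ∃ σ, b σ = t) ∧
    Function.Injective b ∧
    ∀ σ τ : List Bool, σ <+: τ ↔ b σ <+: b τ

/-- `c` is a strictly increasing `n`-chain of elements of `S`. -/
def ChainIn (n : ℕ) (S : Set (List Bool)) (c : Fin n → List Bool) : Prop :=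
  (∀ i, c i ∈ S) ∧ ∀ i j : Fin n, i < j → SPrefix (c i) (c j)


/-- order embedding of the tree into itself -/
def TEmb (b : List Bool → List Bool) : Prop := ∀ σ τ : List Bool, σ <+: τ ↔ b σ <+: b τ

theorem split_aux : ∀ σ τ : List Bool, ¬ σ <+: τ →
    ∃ (ρ : List Bool) (i : Bool), ρ ++ [i] <+: σ ∧ (ρ = τ ∨ ρ ++ [!i] <+: τ)
  | [], τ, h => absurd ⟨_, rfl⟩ h
  | a :: σ, [], _ => ⟨[], a, by simp, Or.inl rfl⟩
  | a :: σ, c :: τ, h => by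
    by_cases hac : a = c
    · subst hac
      have h' : ¬ σ <+: τ := fun h' => h (by simpa using h')
      obtain ⟨ρ, i, h1, h2⟩ := split_aux σ τ h'
      refine ⟨a :: ρ, i, by simpa using h1, ?_⟩
      rcases h2 with h2 | h2
      · left; rw [h2]
      · right; simpa using h2
    · refine ⟨[], a, by simp, Or.inr ?_⟩
      have : (!a) = c := by cases a <;> cases c <;> simp_all
      simp [this]

theorem TEmb.of_step (b : List Bool → List Bool) (h1 : ∀ s i, b s <+: b (s ++ [i]))
    (h2 : ∀ s i, ¬ b (s ++ [i]) <+: b (s ++ [!i])) : TEmb b := by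
  have mono : ∀ u s, b s <+: b (s ++ u) := by
    intro u
    induction u with
    | nil => intro s; simp
    | cons i u ih =>
      intro s
      have := ih (s ++ [i])
      simp only [List.append_assoc, List.singleton_append] at this
      exact (h1 s i).trans this
  have mono' : ∀ s t, s <+: t → b s <+: b t := by
    rintro s t ⟨u, rfl⟩
    exact mono u s
  have h2' : ∀ s i, ¬ b (s ++ [!i]) <+: b (s ++ [i]) := by
    intro s i
    simpa using h2 s (!i)
  intro σ τ
  refine ⟨mono' σ τ, fun h => ?_⟩
  by_contra hn
  obtain ⟨ρ, i, ha, hb⟩ := split_aux σ τ hn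
  have ha' := (mono' _ _ ha).trans h
  rcases hb with rfl | hb
  · exact h2 ρ i (ha'.trans (h1 ρ (!i)))
  · rcases (le_total _ _).imp (List.prefix_of_prefix_length_le ha' (mono' _ _ hb))
      (List.prefix_of_prefix_length_le (mono' _ _ hb) ha') with h | h
    · exact h2 _ _ h
    · exact h2' _ _ h

theorem TEmb.comp {a b : List Bool → List Bool} (ha : TEmb a) (hb : TEmb b) :
    TEmb (fun x => a (b x)) := fun σ τ => (hb σ τ).trans (ha _ _)

theorem TEmb.cons (i : Bool) : TEmb (fun x => i :: x) := fun σ τ => by simp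

theorem TEmb.inj {b : List Bool → List Bool} (hb : TEmb b) : Function.Injective b := by
  intro x y h
  have h1 : x <+: y := (hb x y).2 (by rw [h])
  have h2 : y <+: x := (hb y x).2 (by rw [h])
  exact h1.eq_of_length (le_antisymm h1.length_le h2.length_le)

theorem TEmb.sp_iff {b : List Bool → List Bool} (hb : TEmb b) (x y : List Bool) :
    SPrefix (b x) (b y) ↔ SPrefix x y := by
  unfold SPrefix
  rw [← hb x y, hb.inj.ne_iff]

theorem tt1_aux {K : Type} (f : List Bool → K) (A : Finset K) :
    ∀ σ, (∀ τ, σ <+: τ → f τ ∈ A) → ∃ b, TEmb b ∧ ∃ col, ∀ x, f (b x) = col := by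
  classical
  induction A using Finset.induction_on with
  | empty => intro σ h; simpa using h σ List.prefix_rfl
  | insert a A _ ih =>
    intro σ h
    by_cases hc : ∃ ρ, σ <+: ρ ∧ ∀ τ, ρ <+: τ → f τ ≠ a
    · obtain ⟨ρ, h1, h2⟩ := hc
      refine ih ρ fun τ hτ => ?_
      have := h τ (h1.trans hτ)
      rw [Finset.mem_insert] at this
      exact this.resolve_left (h2 τ hτ)
    · push Not at hc
      have hc' : ∀ ρ, ∃ τ, σ <+: ρ → (ρ <+: τ ∧ f τ = a) := by
        intro ρ
        by_cases hρ : σ <+: ρ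
        · obtain ⟨τ, h1⟩ := hc ρ hρ
          exact ⟨τ, fun _ => h1⟩
        · exact ⟨[], fun h => absurd h hρ⟩
      choose nxt hnxt using hc'
      let b : List Bool → List Bool :=
        fun s => s.foldl (fun x i => nxt (x ++ [i])) (nxt σ)
      have bs : ∀ s i, b (s ++ [i]) = nxt (b s ++ [i]) := by
        intro s i; simp [b]
      have hb : ∀ s, σ <+: b s ∧ f (b s) = a := by
        intro s
        induction s using List.reverseRecOn with
        | nil => exact hnxt σ List.prefix_rfl
        | append_singleton s i ih =>
          rw [bs]
          have h1 : σ <+: b s ++ [i] := ih.1.trans (List.prefix_append _ _)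
          have h2 := hnxt _ h1
          exact ⟨h1.trans h2.1, h2.2⟩
      have hs : ∀ s i, b s ++ [i] <+: b (s ++ [i]) := by
        intro s i
        rw [bs]
        exact (hnxt _ ((hb s).1.trans (List.prefix_append _ _))).1
      refine ⟨b, TEmb.of_step b (fun s i => (List.prefix_append _ _).trans (hs s i)) ?_, a,
        fun x => (hb x).2⟩
      intro s i h
      have h1 := (hs s i).trans h
      have h2 := hs s (!i)
      have h3 := List.prefix_of_prefix_length_le h1 h2 (by simp)
      simp at h3

theorem tt1 {K : Type} [Finite K] (f : List Bool → K) :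
    ∃ b, TEmb b ∧ ∃ col, ∀ x, f (b x) = col := by
  have := Fintype.ofFinite K
  exact tt1_aux f Finset.univ [] (by simp)

theorem prehom {n k : ℕ} (f : (Fin n → List Bool) → List Bool → Fin k) :
    ∃ b, TEmb b ∧ ∀ s t t', SPrefix s t → SPrefix s t' → ∀ c : Fin n → List Bool,
      (∀ i, c i <+: b s) → f c (b t) = f c (b t') := by
  have key : ∀ e : {e // TEmb e}, ∃ g, TEmb g ∧ ∀ c : Fin n → List Bool,
      (∀ i, c i <+: e.1 []) → ∀ x y, f c (e.1 (g x)) = f c (e.1 (g y)) := by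
    intro e
    have : Finite {t // t <+: e.1 []} := by
      have : {t | t <+: e.1 []} ⊆ {t | t ∈ (e.1 []).inits} := fun t ht => by simpa using ht
      exact ((List.finite_toSet _).subset this).to_subtype
    obtain ⟨g, hg, col, h⟩ := tt1
      (fun x => fun c : Fin n → {t // t <+: e.1 []} => f (fun i => (c i).1) (e.1 x))
    refine ⟨g, hg, fun c hc x y => ?_⟩
    exact congrFun ((h x).trans (h y).symm) (fun i => ⟨c i, hc i⟩)
  choose g hg hgc using key
  let step : {e // TEmb e} → Bool → {e // TEmb e} := fun e i =>
    ⟨fun x => e.1 (g e (i :: x)), e.2.comp ((hg e).comp (TEmb.cons i))⟩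
  let R : List Bool → {e // TEmb e} := fun s => s.foldl step ⟨fun x => x, fun _ _ => Iff.rfl⟩
  have Rs : ∀ s i, R (s ++ [i]) = step (R s) i := by intro s i; simp [R]
  have rng : ∀ (u : List Bool) (e : {e // TEmb e}) (x : List Bool),
      ∃ y, (u.foldl step e).1 x = e.1 y := by
    intro u
    induction u with
    | nil => intro e x; exact ⟨x, rfl⟩
    | cons i u ih =>
      intro e x
      obtain ⟨y, hy⟩ := ih (step e i) x
      exact ⟨_, hy⟩
  have rng' : ∀ s t, SPrefix s t → ∃ z, (R t).1 [] = (R s).1 (g (R s) z) := by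
    rintro s t ⟨⟨u, rfl⟩, hne⟩
    cases u with
    | nil => simp at hne
    | cons i u =>
      obtain ⟨y, hy⟩ := rng u (step (R s) i) []
      refine ⟨i :: y, ?_⟩
      rw [← show (step (R s) i).1 y = (R s).1 (g (R s) (i :: y)) from rfl, ← hy]
      simp [R]
  refine ⟨fun s => (R s).1 [], TEmb.of_step _ ?_ ?_, ?_⟩
  · intro s i
    rw [Rs]
    exact ((R s).2 _ _).1 ⟨_, rfl⟩
  · intro s i h
    rw [Rs, Rs] at h
    have h1 := ((hg (R s)) _ _).2 (((R s).2 _ _).2 h)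
    simp at h1
  · intro s t t' h h' c hc
    obtain ⟨z, hz⟩ := rng' s t h
    obtain ⟨z', hz'⟩ := rng' s t' h'
    simp only [hz, hz']
    exact hgc (R s) c hc z z'

theorem tt_main (k m : ℕ) : ∀ f : (Fin (m + 1) → List Bool) → Fin k,
    ∃ b, TEmb b ∧ ∃ col, ∀ c : Fin (m + 1) → List Bool,
      (∀ i j, i < j → SPrefix (c i) (c j)) → f (fun i => b (c i)) = col := by
  induction m with
  | zero =>
    intro f
    obtain ⟨b, hb, col, h⟩ := tt1 (fun x => f (fun _ => x))
    refine ⟨b, hb, col, fun c _ => ?_⟩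
    rw [← h (c 0)]
    congr 1
    funext i
    rw [show i = 0 from Fin.ext (by simp)]
  | succ m ih =>
    intro f
    obtain ⟨b, hb, h⟩ := prehom (fun c x => f (Fin.snoc (α := fun _ => List Bool) c x))
    obtain ⟨g, hg, col, hcol⟩ := ih (fun c => f (Fin.snoc (α := fun _ => List Bool)
      (fun i => b (c i)) (b (c (Fin.last m) ++ [true]))))
    refine ⟨fun x => b (g x), hb.comp hg, col, fun c hc => ?_⟩
    rw [← hcol (fun i => c i.castSucc) (fun i j hij => hc _ _ (by simpa using hij))]
    have e1 : (fun i => b (g (c i))) = Fin.snoc (α := fun _ => List Bool)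
        (fun i : Fin (m + 1) => b (g (c i.castSucc))) (b (g (c (Fin.last (m + 1))))) := by
      funext i
      refine Fin.lastCases ?_ (fun j => ?_) i <;> simp
    rw [e1]
    refine h (g (c (Fin.last m).castSucc)) _ _ ?_ ?_ _ ?_
    · rw [hg.sp_iff]
      exact hc _ _ (Fin.castSucc_lt_last _)
    · exact ⟨List.prefix_append _ _, by simp⟩
    · intro i
      rw [← hb, ← hg]
      rcases (Fin.le_last i).eq_or_lt with rfl | hi
      · exact List.prefix_rfl
      · exact (hc _ _ (by simpa using hi)).1

/-- Ramsey's theorem for trees in all exponents. -/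
theorem tree_ramsey_all_exponents (n k : ℕ) (hn : 1 ≤ n) (hk : 1 ≤ k)
    (f : (Fin n → List Bool) → Fin k) :
    ∃ S : Set (List Bool), IsoSubtree S ∧
      ∃ col : Fin k, ∀ c : Fin n → List Bool, ChainIn n S c → f c = col := by
  obtain ⟨m, rfl⟩ : ∃ m, n = m + 1 := ⟨n - 1, by omega⟩
  obtain ⟨b, hb, col, h⟩ := tt_main k m f
  refine ⟨Set.range b, ⟨b, fun σ => ⟨σ, rfl⟩, fun t ht => ht, hb.inj, hb⟩, col, ?_⟩
  rintro c ⟨h1, h2⟩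
  choose d hd using h1
  rw [← h d (fun i j hij => by rw [← hb.sp_iff, hd, hd]; exact h2 i j hij)]
  congr 1
  funext i
  exact (hd i).symm
end

section
/- Ramsey's theorem for trees in exponent one: for every k ≥ 1 and every coloring h : List Bool → Fin k of the nodes of 2^{<ℕ}, and every subtree T of 2^{<ℕ} isomorphic to 2^{<ℕ}, there exist a color c ∈ Fin k and a subtree S ⊆ T isomorphic to 2^{<ℕ} such that h(σ) = c for all σ ∈ S. -/
/-- The embedding obtained by iterating `pick`. -/
def emb (pick : List Bool → List Bool) : List Bool → List Bool → List Bool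
  | s, [] => pick s
  | s, x :: l => emb pick (pick s ++ [x]) l

theorem pick_prefix_emb (pick : List Bool → List Bool) (hp : ∀ s, s <+: pick s)
    (l s : List Bool) : pick s <+: emb pick s l ∧ s <+: emb pick s l := by
  induction l generalizing s with
  | nil => exact ⟨List.prefix_rfl, hp s⟩
  | cons x l ih =>
    have h1 : pick s <+: emb pick s (x :: l) :=
      (List.prefix_append (pick s) [x]).trans (ih (pick s ++ [x])).2
    exact ⟨h1, (hp s).trans h1⟩

theorem emb_iff (pick : List Bool → List Bool) (hp : ∀ s, s <+: pick s)
    (l m s : List Bool) : l <+: m ↔ emb pick s l <+: emb pick s m := by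
  induction l generalizing s m with
  | nil => exact ⟨fun _ => (pick_prefix_emb pick hp m s).1, fun _ => List.nil_prefix⟩
  | cons x l ih =>
    cases m with
    | nil =>
      constructor
      · intro h
        simp at h
      · intro h
        have h1 := ((pick_prefix_emb pick hp l (pick s ++ [x])).2.trans h).length_le
        simp [emb] at h1
    | cons y m =>
      by_cases hxy : x = y
      · subst hxy
        rw [List.cons_prefix_cons]
        simpa [emb] using ih m (pick s ++ [x])
      · constructor
        · intro h
          exact absurd (List.cons_prefix_cons.1 h).1 hxy
        · intro h
          have h1 := (pick_prefix_emb pick hp l (pick s ++ [x])).2.trans h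
          have h2 := (pick_prefix_emb pick hp m (pick s ++ [y])).2
          have h3 := (List.prefix_of_prefix_length_le h1 h2 (by simp)).eq_of_length (by simp)
          simp at h3
          exact absurd h3 hxy

theorem emb_color {α : Type*} (g : List Bool → α) (c : α) (s0 : List Bool)
    (pick : List Bool → List Bool) (hp : ∀ s, s <+: pick s)
    (hc : ∀ s, s0 <+: s → g (pick s) = c) (l s : List Bool) (hs : s0 <+: s) :
    g (emb pick s l) = c := by
  induction l generalizing s with
  | nil => exact hc s hs
  | cons x l ih => exact ih _ (hs.trans ((hp s).trans (List.prefix_append _ _)))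

theorem exists_dense {k : ℕ} (g : List Bool → Fin k) :
    ∃ c, ∃ s0, ∀ s, s0 <+: s → ∃ r, s <+: r ∧ g r = c := by
  by_contra! hn
  have key : ∀ A : Finset (Fin k), ∃ s, ∀ r, s <+: r → g r ∉ A := by
    intro A
    induction A using Finset.induction_on with
    | empty => exact ⟨[], by simp⟩
    | insert a A _ ih =>
      obtain ⟨s, hs⟩ := ih
      obtain ⟨t, hst, ht⟩ := hn a s
      refine ⟨t, fun r hr hm => ?_⟩
      rcases Finset.mem_insert.1 hm with h | h
      · exact ht r hr h
      · exact hs r (hst.trans hr) h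
  obtain ⟨s, hs⟩ := key Finset.univ
  exact hs s List.prefix_rfl (Finset.mem_univ _)

/-- Ramsey's theorem for trees in exponent one. -/
theorem tree_ramsey_exponent_one (k : ℕ) (hk : 1 ≤ k)
    (h : List Bool → Fin k)
    (T : Set (List Bool)) (hT : IsoSubtree T) :
    ∃ c : Fin k, ∃ S : Set (List Bool), S ⊆ T ∧ IsoSubtree S ∧
      ∀ σ ∈ S, h σ = c := by
  obtain ⟨b, hbT, -, -, hb⟩ := hT
  obtain ⟨c, s0, hd⟩ := exists_dense (fun s => h (b s))
  have hex : ∀ s, ∃ r, s <+: r ∧ (s0 <+: s → h (b r) = c) := by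
    intro s
    by_cases hs : s0 <+: s
    · obtain ⟨r, h1, h2⟩ := hd s hs
      exact ⟨r, h1, fun _ => h2⟩
    · exact ⟨s, List.prefix_rfl, fun h => absurd h hs⟩
  choose pick hp hc using hex
  have hiff : ∀ σ τ : List Bool, σ <+: τ ↔ b (emb pick s0 σ) <+: b (emb pick s0 τ) :=
    fun σ τ => (emb_iff pick hp σ τ s0).trans (hb _ _)
  refine ⟨c, Set.range (fun σ => b (emb pick s0 σ)), ?_, ?_, ?_⟩
  · rintro _ ⟨σ, rfl⟩
    exact hbT _
  · refine ⟨fun σ => b (emb pick s0 σ), fun σ => ⟨σ, rfl⟩, fun t ht => ht, ?_, hiff⟩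
    intro σ τ he
    have he' : b (emb pick s0 σ) = b (emb pick s0 τ) := he
    have h1 : σ <+: τ := (hiff σ τ).2 (he' ▸ List.prefix_rfl)
    have h2 : τ <+: σ := (hiff τ σ).2 (he' ▸ List.prefix_rfl)
    exact h1.eq_of_length_le h2.length_le
  · rintro _ ⟨σ, rfl⟩
    exact emb_color (fun s => h (b s)) c s0 pick hp hc σ s0 List.prefix_rfl
end

section
/- End-homogeneity step of the exponent-lowering lemma: for every n ≥ 1, every k ≥ 1, every subtree R of 2^{<ℕ} isomorphic to 2^{<ℕ}, and every coloring f of the strictly increasing (n+1)-chains of R with colors in Fin k, there exists a subtree S ⊆ R isomorphic to 2^{<ℕ} such that for every n-chain σ₁ ⊊ ⋯ ⊊ σₙ of elements of S and all τ, τ′ ∈ S with σₙ ⊊ τ and σₙ ⊊ τ′, one has f(σ₁, …, σₙ, τ) = f(σ₁, …, σₙ, τ′). -/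
/-- Order embeddings of the full binary tree into itself. -/
def TreeEmb (e : List Bool → List Bool) : Prop :=
  ∀ σ τ : List Bool, σ <+: τ ↔ e σ <+: e τ

theorem TreeEmb.inj {e : List Bool → List Bool} (h : TreeEmb e) : Function.Injective e := by
  intro a b hab
  have h1 : a <+: b := (h a b).2 (hab ▸ List.prefix_refl _)
  have h2 : b <+: a := (h b a).2 (hab ▸ List.prefix_refl _)
  exact h1.eq_of_length_le h2.length_le

theorem TreeEmb.comp {e g : List Bool → List Bool} (h : TreeEmb e) (h' : TreeEmb g) :
    TreeEmb (fun x => e (g x)) := fun σ τ => (h' σ τ).trans (h _ _)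

theorem treeEmb_append (x : List Bool) : TreeEmb (fun y => x ++ y) := fun _ _ =>
  (List.prefix_append_right_inj x).symm

theorem treeEmb_cons (b : Bool) : TreeEmb (fun y => b :: y) := treeEmb_append [b]

/-- Embedding obtained by repeatedly choosing extensions. -/
def extTree (ext : List Bool → List Bool) : List Bool → List Bool → List Bool
  | x, [] => ext x
  | x, b :: ρ => extTree ext (ext x ++ [b]) ρ

theorem extTree_prefix (ext : List Bool → List Bool) (hext : ∀ x, x <+: ext x)
    (ρ : List Bool) : ∀ x, ext x <+: extTree ext x ρ := by
  induction ρ with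
  | nil => intro x; exact List.prefix_refl _
  | cons b ρ ih =>
    intro x
    exact ((List.prefix_append _ _).trans (hext _)).trans (ih _)

theorem extTree_prefix' (ext : List Bool → List Bool) (hext : ∀ x, x <+: ext x)
    (b : Bool) (ρ x : List Bool) : ext x ++ [b] <+: extTree ext x (b :: ρ) :=
  (hext _).trans (extTree_prefix ext hext ρ _)

theorem extTree_emb (ext : List Bool → List Bool) (hext : ∀ x, x <+: ext x)
    (x : List Bool) : TreeEmb (extTree ext x) := by
  intro σ
  induction σ generalizing x with
  | nil => intro τ; exact ⟨fun _ => extTree_prefix ext hext τ x, fun _ => List.nil_prefix⟩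
  | cons a σ ih =>
    intro τ
    cases τ with
    | nil =>
      constructor
      · intro h; simp at h
      · intro h
        have h1 := ((extTree_prefix' ext hext a σ x).trans h).length_le
        simp [extTree] at h1
    | cons b τ =>
      by_cases hab : a = b
      · subst hab
        rw [List.prefix_cons_inj]
        exact ih _ τ
      · constructor
        · intro h
          exact absurd (List.cons_prefix_cons.1 h).1 hab
        · intro h
          have h1 := (extTree_prefix' ext hext a σ x).trans h
          have h2 := extTree_prefix' ext hext b τ x
          have h3 := List.prefix_of_prefix_length_le h1 h2 (by simp)
          have h4 := h3.eq_of_length (by simp)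
          simp at h4
          exact absurd h4 hab

theorem tree_pigeonhole {κ : Type} [DecidableEq κ] (s : Finset κ) :
    ∀ c : List Bool → κ, (∀ ρ, c ρ ∈ s) →
      ∃ T, TreeEmb T ∧ ∀ ρ ρ', c (T ρ) = c (T ρ') := by
  induction s using Finset.induction_on with
  | empty => intro c hc; exact absurd (hc []) (by simp)
  | insert i s _ ih =>
    intro c hc
    by_cases hd : ∀ x, ∃ y, x <+: y ∧ c y = i
    · choose ext h1 h2 using hd
      refine ⟨extTree ext [], extTree_emb ext h1 _, ?_⟩
      have key : ∀ ρ x, c (extTree ext x ρ) = i := by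
        intro ρ
        induction ρ with
        | nil => intro x; exact h2 x
        | cons b ρ ih' => intro x; exact ih' _
      intro ρ ρ'
      rw [key, key]
    · push Not at hd
      obtain ⟨x, hx⟩ := hd
      obtain ⟨T, hT, hT'⟩ := ih (fun y => c (x ++ y)) (fun ρ => by
        have h1 := hc (x ++ ρ)
        have h2 := hx (x ++ ρ) (List.prefix_append _ _)
        exact (Finset.mem_insert.1 h1).resolve_left h2)
      exact ⟨fun y => x ++ T y, (treeEmb_append x).comp hT, hT'⟩

theorem finite_prefixes (r : List Bool) : Finite {x : List Bool // x <+: r} := by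
  have : {x : List Bool | x <+: r} = {x | x ∈ r.inits} := by
    ext x; simp
  have h : Set.Finite {x : List Bool | x <+: r} := by
    rw [this]; exact List.finite_toSet _
  exact h

/-- Replace the root of an embedding by the empty sequence. -/
def reroot (T : List Bool → List Bool) : List Bool → List Bool
  | [] => []
  | b :: ρ => T (b :: ρ)

theorem reroot_emb {T : List Bool → List Bool} (hT : TreeEmb T) : TreeEmb (reroot T) := by
  intro σ τ
  cases σ with
  | nil => simp [reroot]
  | cons a σ =>
    cases τ with
    | nil =>
      constructor
      · intro h; simp at h
      · intro h
        have h1 : T (a :: σ) = [] := List.prefix_nil.1 h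
        exact (hT _ _).2 (h1 ▸ List.nil_prefix)
    | cons b τ => exact hT _ _

theorem step_exists {n k : ℕ} (f : (Fin (n + 1) → List Bool) → Fin k)
    (E : List Bool → List Bool) :
    ∃ T, TreeEmb T ∧ T [] = [] ∧
      ∀ c : Fin n → List Bool, (∀ i, c i <+: E []) → ∀ b ρ b' ρ',
        f (Fin.snoc (α := fun _ => List Bool) c (E (T (b :: ρ)))) =
          f (Fin.snoc (α := fun _ => List Bool) c (E (T (b' :: ρ')))) := by
  classical
  have := finite_prefixes (E [])
  let κ := (Fin n → {x : List Bool // x <+: E []}) → Fin k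
  have : Fintype κ := Fintype.ofFinite _
  obtain ⟨T, hT, h⟩ := tree_pigeonhole (κ := κ) Finset.univ
    (fun y c => f (Fin.snoc (α := fun _ => List Bool) (fun i => (c i).1) (E y)))
    (fun _ => Finset.mem_univ _)
  refine ⟨reroot T, reroot_emb hT, rfl, ?_⟩
  intro c hc b ρ b' ρ'
  exact congrFun (h (b :: ρ) (b' :: ρ')) (fun i => ⟨c i, hc i⟩)

/-- Fusion of a choice of refinements. -/
def fuse (st : (List Bool → List Bool) → List Bool → List Bool) :
    (List Bool → List Bool) → List Bool → List Bool
  | E, [] => E []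
  | E, b :: ρ => fuse st (fun y => E (st E (b :: y))) ρ

theorem fuse_mem (st : (List Bool → List Bool) → List Bool → List Bool) (ρ : List Bool) :
    ∀ E, ∃ y, fuse st E ρ = E y := by
  induction ρ with
  | nil => intro E; exact ⟨[], rfl⟩
  | cons b ρ ih =>
    intro E
    obtain ⟨y, hy⟩ := ih (fun y => E (st E (b :: y)))
    exact ⟨_, hy⟩

theorem fuse_cons (st : (List Bool → List Bool) → List Bool → List Bool) (b : Bool)
    (ρ : List Bool) (E : List Bool → List Bool) :
    ∃ y, fuse st E (b :: ρ) = E (st E (b :: y)) :=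
  fuse_mem st ρ (fun y => E (st E (b :: y)))

theorem fuse_emb (st : (List Bool → List Bool) → List Bool → List Bool)
    (h1 : ∀ E, TreeEmb (st E)) (h2 : ∀ E, st E [] = []) (σ : List Bool) :
    ∀ (E : List Bool → List Bool), TreeEmb E → ∀ τ, σ <+: τ ↔ fuse st E σ <+: fuse st E τ := by
  induction σ with
  | nil =>
    intro E hE τ
    obtain ⟨y, hy⟩ := fuse_mem st τ E
    rw [hy]
    exact ⟨fun _ => (hE [] y).1 List.nil_prefix, fun _ => List.nil_prefix⟩
  | cons a σ ih =>
    intro E hE τ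
    cases τ with
    | nil =>
      obtain ⟨y, hy⟩ := fuse_cons st a σ E
      rw [hy]
      constructor
      · intro h; simp at h
      · intro h
        have h3 := (hE _ []).2 h
        rw [← h2 E] at h3
        have h4 := (h1 E _ _).2 h3
        simp at h4
    | cons b τ =>
      by_cases hab : a = b
      · subst hab
        rw [List.prefix_cons_inj]
        exact ih _ (hE.comp ((h1 E).comp (treeEmb_cons a))) τ
      · obtain ⟨y, hy⟩ := fuse_cons st a σ E
        obtain ⟨z, hz⟩ := fuse_cons st b τ E
        rw [hy, hz]
        constructor
        · intro h
          exact absurd (List.cons_prefix_cons.1 h).1 hab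
        · intro h
          have h4 := (h1 E _ _).2 ((hE _ _).2 h)
          exact absurd (List.cons_prefix_cons.1 h4).1 hab

theorem fuse_hom {n k : ℕ} (f : (Fin (n + 1) → List Bool) → Fin k)
    (st : (List Bool → List Bool) → List Bool → List Bool)
    (h3 : ∀ E : List Bool → List Bool, ∀ c : Fin n → List Bool, (∀ i, c i <+: E []) → ∀ b ρ b' ρ',
        f (Fin.snoc (α := fun _ => List Bool) c (E (st E (b :: ρ)))) =
          f (Fin.snoc (α := fun _ => List Bool) c (E (st E (b' :: ρ')))))
    (c : Fin n → List Bool) (σ : List Bool) :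
    ∀ E, (∀ i, c i <+: fuse st E σ) → ∀ b ρ b' ρ',
        f (Fin.snoc (α := fun _ => List Bool) c (fuse st E (σ ++ b :: ρ))) =
          f (Fin.snoc (α := fun _ => List Bool) c (fuse st E (σ ++ b' :: ρ'))) := by
  induction σ with
  | nil =>
    intro E hc b ρ b' ρ'
    obtain ⟨y, hy⟩ := fuse_cons st b ρ E
    obtain ⟨z, hz⟩ := fuse_cons st b' ρ' E
    rw [List.nil_append, List.nil_append, hy, hz]
    exact h3 E c hc _ _ _ _
  | cons a σ ih =>
    intro E hc b ρ b' ρ'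
    exact ih _ hc _ _ _ _

/-- End-homogeneity step of the exponent-lowering lemma. -/
theorem end_homogeneity (n k : ℕ) (hn : 1 ≤ n) (hk : 1 ≤ k)
    (R : Set (List Bool)) (hR : IsoSubtree R)
    (f : (Fin (n + 1) → List Bool) → Fin k) :
    ∃ S : Set (List Bool), S ⊆ R ∧ IsoSubtree S ∧
      ∀ c : Fin n → List Bool, ChainIn n S c →
        ∀ τ ∈ S, ∀ τ' ∈ S,
          SPrefix (c ⟨n - 1, by omega⟩) τ → SPrefix (c ⟨n - 1, by omega⟩) τ' →
          f (Fin.snoc c τ) = f (Fin.snoc c τ') := by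
  obtain ⟨E, hER, -, -, hE⟩ := hR
  choose st h1 h2 h3 using step_exists (n := n) f
  have hF : TreeEmb (fuse st E) := fun σ τ => fuse_emb st h1 h2 σ E hE τ
  refine ⟨Set.range (fuse st E), ?_, ?_, ?_⟩
  · rintro _ ⟨σ, rfl⟩
    obtain ⟨y, hy⟩ := fuse_mem st σ E
    rw [hy]
    exact hER y
  · exact ⟨fuse st E, fun σ => ⟨σ, rfl⟩, fun t ht => ht, hF.inj, hF⟩
  · rintro c ⟨hcS, hc⟩ _ ⟨τ, rfl⟩ _ ⟨τ', rfl⟩ hτ hτ'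
    obtain ⟨σ, hσ⟩ := hcS ⟨n - 1, by omega⟩
    have hle : ∀ i, c i <+: fuse st E σ := by
      intro i
      rw [hσ]
      by_cases hi : i = ⟨n - 1, by omega⟩
      · rw [← hi]
      · refine (hc i _ ?_).1
        have := i.2
        rw [Fin.lt_def]
        have hne : i.1 ≠ n - 1 := fun h => hi (Fin.ext h)
        show i.1 < n - 1
        omega
    have ext : ∀ τ, SPrefix (c ⟨n - 1, by omega⟩) (fuse st E τ) →
        ∃ b ρ, τ = σ ++ b :: ρ := by
      intro τ hτ
      rw [← hσ] at hτ
      obtain ⟨t, ht⟩ := (hF σ τ).2 hτ.1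
      cases t with
      | nil => exact absurd (by rw [← ht, List.append_nil]) hτ.2
      | cons b ρ => exact ⟨b, ρ, ht.symm⟩
    obtain ⟨b, ρ, rfl⟩ := ext τ hτ
    obtain ⟨b', ρ', rfl⟩ := ext τ' hτ'
    exact fuse_hom f st h3 c σ E hle _ _ _ _
end

section
/- Maximal stable color lemma: let m ≥ 1, let T be a subtree of 2^{<ℕ} isomorphic to 2^{<ℕ} with root ρ₀ (the ⊆-least element of T), and let h : List Bool → Fin m be a coloring of nodes. Then there exist a color c ∈ Fin m and a node ρ ∈ T with ρ₀ ⊊ ρ such that (i) every τ ∈ T with ρ ⊊ τ satisfies c ≤ h(τ), and (ii) there is a subtree S ⊆ {τ ∈ T : ρ ⊊ τ} isomorphic to 2^{<ℕ} with h(τ) = c for all τ ∈ S. -/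
/-- Embedding built by iterating an extension function `e`. -/
def embF (e : List Bool → List Bool) : List Bool → List Bool → List Bool
  | s, [] => e s
  | s, x :: l => embF e (e s ++ [x]) l

theorem embF_spec (e : List Bool → List Bool) (r : List Bool) (P : List Bool → Prop)
    (he : ∀ s, r <+: s → s <+: e s ∧ P (e s)) (l : List Bool) :
    ∀ s, r <+: s → e s <+: embF e s l ∧ P (embF e s l) := by
  induction l with
  | nil => intro s hs; exact ⟨List.prefix_rfl, (he s hs).2⟩
  | cons x l ih =>
    intro s hs
    have h1 : r <+: e s ++ [x] := (hs.trans (he s hs).1).trans (List.prefix_append _ _)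
    have h2 := ih _ h1
    exact ⟨((List.prefix_append _ _).trans (he _ h1).1).trans h2.1, h2.2⟩

theorem embF_iff (e : List Bool → List Bool) (r : List Bool)
    (he : ∀ s, r <+: s → s <+: e s) (l : List Bool) :
    ∀ l' s, r <+: s → (l <+: l' ↔ embF e s l <+: embF e s l') := by
  have key := embF_spec e r (fun _ => True) (fun s hs => ⟨he s hs, trivial⟩)
  have key2 : ∀ x l s, r <+: s → e s ++ [x] <+: embF e s (x :: l) ∧ r <+: e s ++ [x] := by
    intro x l s hs
    have h1 : r <+: e s ++ [x] := (hs.trans (he s hs)).trans (List.prefix_append _ _)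
    exact ⟨(he _ h1).trans (key l _ h1).1, h1⟩
  induction l with
  | nil => intro l' s hs; simpa [embF] using (key l' s hs).1
  | cons x l ih =>
    intro l' s hs
    cases l' with
    | nil =>
      have h1 := (key2 x l s hs).1.length_le
      constructor
      · intro h; simp at h
      · intro h
        have h2 := h.length_le
        simp only [embF, List.length_append, List.length_singleton] at h1 h2
        omega
    | cons y l' =>
      by_cases hxy : x = y
      · subst hxy
        rw [List.cons_prefix_cons]
        simpa [embF] using ih l' _ (key2 x l s hs).2
      · constructor
        · intro h; exact absurd (List.cons_prefix_cons.1 h).1 hxy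
        · intro h
          have h1 := (key2 x l s hs).1.trans h
          have h2 := (key2 y l' s hs).1
          have h3 := List.prefix_of_prefix_length_le h1 h2 (by simp)
          have h4 := h3.eq_of_length (by simp)
          simp at h4
          exact absurd h4 hxy

/-- Maximal stable color lemma. -/
theorem maximal_stable_color (m : ℕ) (hm : 1 ≤ m)
    (T : Set (List Bool)) (hT : IsoSubtree T)
    (ρ₀ : List Bool) (hρ₀ : ρ₀ ∈ T) (hroot : ∀ τ ∈ T, ρ₀ <+: τ)
    (h : List Bool → Fin m) :
    ∃ c : Fin m, ∃ ρ ∈ T, SPrefix ρ₀ ρ ∧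
      (∀ τ ∈ T, SPrefix ρ τ → c ≤ h τ) ∧
      ∃ S : Set (List Bool), S ⊆ {τ ∈ T | SPrefix ρ τ} ∧ IsoSubtree S ∧
        ∀ τ ∈ S, h τ = c := by
  obtain ⟨b, hbT, hbs, hbi, hb⟩ := hT
  have hb0 : b [] = ρ₀ := by
    have h1 := hroot _ (hbT [])
    obtain ⟨σ, rfl⟩ := hbs _ hρ₀
    exact congrArg b ((List.prefix_nil.1 ((hb _ _).2 h1)).symm)
  have hbS : ∀ σ τ, SPrefix σ τ ↔ SPrefix (b σ) (b τ) := by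
    intro σ τ
    unfold SPrefix
    rw [hb σ τ, hbi.ne_iff]
  let P : Set (Fin m) := {c | ∃ r : List Bool, r ≠ [] ∧ ∀ τ, SPrefix r τ → c ≤ h (b τ)}
  have hP : P.Nonempty := ⟨⟨0, hm⟩, [true], by simp, fun τ _ => Nat.zero_le _⟩
  obtain ⟨c, ⟨r, hr, hc⟩, hmax⟩ := P.toFinite.exists_maximal hP
  have hext : ∀ s, r <+: s → ∃ τ, SPrefix s τ ∧ h (b τ) = c := by
    intro s hs
    by_contra hcon
    push Not at hcon
    have hsr : ∀ τ, SPrefix s τ → SPrefix r τ := by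
      rintro τ ⟨h1, h2⟩
      refine ⟨hs.trans h1, ?_⟩
      rintro rfl
      exact h2 (h1.eq_of_length (le_antisymm h1.length_le hs.length_le))
    have hlt : ∀ τ, SPrefix s τ → c.val + 1 ≤ (h (b τ)).val := fun τ hτ =>
      lt_of_le_of_ne (hc τ (hsr τ hτ)) (fun h' => hcon τ hτ h'.symm)
    have hst : SPrefix s (s ++ [true]) := ⟨List.prefix_append _ _, by simp⟩
    have hm' : c.val + 1 < m := lt_of_le_of_lt (hlt _ hst) (h _).isLt
    have hmem : (⟨c.val + 1, hm'⟩ : Fin m) ∈ P := by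
      refine ⟨s, ?_, fun τ hτ => hlt τ hτ⟩
      rintro rfl
      exact hr (List.prefix_nil.1 hs)
    have h5 : c.val + 1 ≤ c.val := hmax hmem (Nat.le_succ c.val)
    omega
  choose! e he using hext
  have hiff := embF_iff e r (fun s hs => (he s hs).1.1)
  have hspec := embF_spec e r (fun t => h (b t) = c) (fun s hs => ⟨(he s hs).1.1, (he s hs).2⟩)
  have hrr : r <+: r := List.prefix_rfl
  refine ⟨c, b r, hbT r, ?_, ?_, Set.range (fun l => b (embF e r l)), ?_, ?_, ?_⟩
  · rw [← hb0, ← hbS]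
    exact ⟨List.nil_prefix, hr.symm⟩
  · intro τ hτ hs
    obtain ⟨σ, rfl⟩ := hbs τ hτ
    exact hc σ ((hbS _ _).2 hs)
  · rintro _ ⟨l, rfl⟩
    refine ⟨hbT _, (hbS _ _).1 ?_⟩
    have h1 := (he r hrr).1
    have h2 := (hspec l r hrr).1
    refine ⟨h1.1.trans h2, fun h3 => ?_⟩
    rw [← h3] at h2
    exact h1.2 (h1.1.eq_of_length (le_antisymm h1.1.length_le h2.length_le))
  · have hI : ∀ σ τ, σ <+: τ ↔ b (embF e r σ) <+: b (embF e r τ) := fun σ τ =>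
      (hiff σ τ r hrr).trans (hb _ _)
    refine ⟨fun l => b (embF e r l), fun l => ⟨l, rfl⟩, fun t ht => ht, ?_, hI⟩
    intro σ τ hστ
    have h1 : σ <+: τ := (hI σ τ).2 (by simp only at hστ; rw [hστ])
    have h2 : τ <+: σ := (hI τ σ).2 (by simp only at hστ; rw [hστ])
    exact h1.eq_of_length (le_antisymm h1.length_le h2.length_le)
  · rintro _ ⟨l, rfl⟩
    exact (hspec l r hrr).2
end

section
/- Reduction of Ramsey's theorem to tree Ramsey: let n ≥ 1, k ≥ 1, and let f assign to each strictly increasing n-tuple m₁ < m₂ < ⋯ < mₙ of natural numbers a color in Fin k. Define g on strictly increasing n-chains of 2^{<ℕ} by g(σ₁, …, σₙ) = f(length σ₁, …, length σₙ). If S is a subtree of 2^{<ℕ} isomorphic to 2^{<ℕ} on which g is constant on n-chains, then there exists an infinite set H ⊆ ℕ such that f is constant on all strictly increasing n-tuples drawn from H. -/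
/-- Reduction of Ramsey's theorem to tree Ramsey. -/
theorem ramsey_from_tree_ramsey (n k : ℕ) (hn : 1 ≤ n) (hk : 1 ≤ k)
    (f : (Fin n → ℕ) → Fin k)
    (g : (Fin n → List Bool) → Fin k)
    (hg : ∀ c : Fin n → List Bool, g c = f (fun i => (c i).length))
    (S : Set (List Bool)) (hS : IsoSubtree S)
    (col : Fin k) (hmono : ∀ c : Fin n → List Bool, ChainIn n S c → g c = col) :
    ∃ H : Set ℕ, H.Infinite ∧ ∃ colf : Fin k,
      ∀ t : Fin n → ℕ, (∀ i, t i ∈ H) → StrictMono t → f t = colf := by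
  obtain ⟨b, hbS, -, hinj, hb⟩ := hS
  have hrep : ∀ x y : ℕ, x < y →
      SPrefix (b (List.replicate x true)) (b (List.replicate y true)) := by
    intro x y hxy
    refine ⟨(hb _ _).1 ⟨List.replicate (y - x) true, ?_⟩, ?_⟩
    · rw [← List.replicate_add]
      congr 1
      omega
    · intro h
      have h2 := congrArg List.length (hinj h)
      simp at h2
      omega
  have hlen : StrictMono (fun m : ℕ => (b (List.replicate m true)).length) := by
    intro x y hxy
    obtain ⟨hp, hne⟩ := hrep x y hxy
    exact lt_of_le_of_ne hp.length_le (fun h => hne (hp.eq_of_length h))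
  refine ⟨Set.range (fun m : ℕ => (b (List.replicate m true)).length),
    Set.infinite_range_of_injective hlen.injective, col, ?_⟩
  intro t ht hmt
  choose m hm using ht
  have hm' : ∀ i, (b (List.replicate (m i) true)).length = t i := hm
  have hc := hmono (fun i => b (List.replicate (m i) true))
    ⟨fun i => hbS _, fun i j hij => hrep _ _ (hlen.lt_iff_lt.1 (by
      simp only [hm']
      exact hmt hij))⟩
  rw [hg] at hc
  simpa only [hm'] using hc
end
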